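/- For any 3-dimensional subspace π of Im 𝕆 with orthonormal basis f₁, f₂, f₃, one has |φ(f₁,f₂,f₃)| ≤ 1, with equality if and only if the associator [f₁,f₂,f₃] = 0. -/

import Mathlib

noncomputable section

open Quaternion

/-- Octonions as pairs of quaternions (Cayley–Dickson construction). -/
abbrev Octo : Type := ℍ[ℝ] × ℍ[ℝ]

/-- Octonion multiplication: (q,r)(s,t) = (qs - t̄r, tq + rs̄). -/
def omul (x y : Octo) : Octo :=
  (x.1 * y.1 - star y.2 * x.2, y.2 * x.1 + x.2 * star y.1)

/-- Octonion conjugation: (q,r)̄ = (q̄, -r). -/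
def oconj (x : Octo) : Octo := (star x.1, -x.2)

/-- Inner product ⟨x,y⟩ = (x ȳ + y x̄)/2 (a real multiple of 1, returned as a real). -/
def oinner (x y : Octo) : ℝ :=
  ((omul x (oconj y) + omul y (oconj x)).1).re / 2

/-- x is an imaginary octonion: x + x̄ = 0. -/
def IsIm (x : Octo) : Prop := x + oconj x = 0

/-- Embedding of the reals into the octonions. -/
def oR (r : ℝ) : Octo := ((r : ℍ[ℝ]), 0)

/-- Cross product x×y = (xy - yx)/2. -/
def ocross (x y : Octo) : Octo := (2⁻¹ : ℝ) • (omul x y - omul y x)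

/-- Norm of an octonion. -/
def onorm (x : Octo) : ℝ := Real.sqrt (oinner x x)

/-- Associator [x,y,z] = (xy)z - x(yz). -/
def oassoc (x y z : Octo) : Octo := omul (omul x y) z - omul x (omul y z)

/-- f₁,f₂,f₃ are orthonormal. -/
def OrthoTriple (f1 f2 f3 : Octo) : Prop :=
  oinner f1 f1 = 1 ∧ oinner f2 f2 = 1 ∧ oinner f3 f3 = 1 ∧
  oinner f1 f2 = 0 ∧ oinner f1 f3 = 0 ∧ oinner f2 f3 = 0


/-- Squared norm in coordinates. -/
theorem oinner_self_nonneg_eq (x : Octo) : oinner x x =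
    x.1.re^2 + x.1.imI^2 + x.1.imJ^2 + x.1.imK^2 +
    x.2.re^2 + x.2.imI^2 + x.2.imJ^2 + x.2.imK^2 := by
  simp [oinner, omul, oconj]
  ring

theorem oinner_self_eq_zero (x : Octo) (h : oinner x x = 0) : x = 0 := by
  rw [oinner_self_nonneg_eq] at h
  ext <;> simp <;> nlinarith [sq_nonneg x.1.re, sq_nonneg x.1.imI, sq_nonneg x.1.imJ,
    sq_nonneg x.1.imK, sq_nonneg x.2.re, sq_nonneg x.2.imI, sq_nonneg x.2.imJ, sq_nonneg x.2.imK]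

/-- The octonion norm is multiplicative. -/
theorem oinner_omul_self (x y : Octo) :
    oinner (omul x y) (omul x y) = oinner x x * oinner y y := by
  simp only [oinner_self_nonneg_eq]
  simp [omul]
  ring

theorem isIm_re (x : Octo) (h : IsIm x) : x.1.re = 0 := by
  have := congrArg (fun z : Octo => z.1.re) h
  simp [oconj] at this
  linarith

theorem omul_im_re (x y : Octo) (h : IsIm x) : (omul x y).1.re = - oinner x y := by
  have := isIm_re x h
  simp [oinner, omul, oconj, this]
  ring

theorem oR_re (r : ℝ) : (oR r).1.re = r := rfl

theorem oR_imI (r : ℝ) : (oR r).1.imI = 0 := rfl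

theorem oR_imJ (r : ℝ) : (oR r).1.imJ = 0 := rfl

theorem oR_imK (r : ℝ) : (oR r).1.imK = 0 := rfl

theorem oR_snd (r : ℝ) : (oR r).2 = 0 := rfl

set_option maxHeartbeats 4000000 in
/-- For imaginary octonions the symmetric version of the triple product is explicit. -/
theorem triple_identity (x y z : Octo) (hx : IsIm x) (hy : IsIm y) (hz : IsIm z) :
    omul (omul x y) z + omul x (omul y z) =
      oR (-2 * oinner x (omul y z)) - (2 * oinner x y) • z - (2 * oinner y z) • x
        + (2 * oinner x z) • y := by
  have h1 := isIm_re x hx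
  have h2 := isIm_re y hy
  have h3 := isIm_re z hz
  ext <;> simp [oinner, omul, oconj, oR_re, oR_imI, oR_imJ, oR_imK, oR_snd, h1, h2, h3] <;> ring

theorem oinner_shift (w : Octo) (r : ℝ) :
    oinner (oR (-2 * r) - (2:ℝ) • w) (oR (-2 * r) - (2:ℝ) • w) =
      4 * (oinner w w + 2 * r * w.1.re + r^2) := by
  simp only [oinner_self_nonneg_eq]
  simp [oR]
  ring

theorem assoc_norm (f1 f2 f3 : Octo) (h1 : IsIm f1) (h2 : IsIm f2) (h3 : IsIm f3)
    (hortho : OrthoTriple f1 f2 f3) :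
    oinner (oassoc f1 f2 f3) (oassoc f1 f2 f3) = 4 * (1 - oinner f1 (omul f2 f3) ^ 2) := by
  obtain ⟨a, b, c, d, e, f⟩ := hortho
  have ht := triple_identity f1 f2 f3 h1 h2 h3
  have hA : oassoc f1 f2 f3 =
      oR (-2 * oinner f1 (omul f2 f3)) - (2:ℝ) • omul f1 (omul f2 f3) := by
    rw [d, e, f] at ht
    simp only [mul_zero, zero_smul, sub_zero, add_zero] at ht
    rw [← ht, oassoc, two_smul]
    abel
  rw [hA, oinner_shift, oinner_omul_self, oinner_omul_self, a, b, c, omul_im_re _ _ h1]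
  ring

/-- |φ(f₁,f₂,f₃)| ≤ 1, with equality iff the associator vanishes. -/
theorem stmt10 (f1 f2 f3 : Octo) (h1 : IsIm f1) (h2 : IsIm f2) (h3 : IsIm f3)
    (hortho : OrthoTriple f1 f2 f3) :
    |oinner f1 (omul f2 f3)| ≤ 1 ∧
    (|oinner f1 (omul f2 f3)| = 1 ↔ oassoc f1 f2 f3 = 0) := by
  have h := assoc_norm f1 f2 f3 h1 h2 h3 hortho
  have hn : 0 ≤ oinner (oassoc f1 f2 f3) (oassoc f1 f2 f3) := by
    rw [oinner_self_nonneg_eq]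
    positivity
  refine ⟨?_, ?_, ?_⟩
  · rw [← sq_le_one_iff_abs_le_one]
    linarith
  · intro h'
    apply oinner_self_eq_zero
    rw [h, ← sq_abs, h']
    norm_num
  · intro h'
    have h0 : oinner (oassoc f1 f2 f3) (oassoc f1 f2 f3) = 0 := by
      rw [h', oinner_self_nonneg_eq]
      simp
    have hs : oinner f1 (omul f2 f3) ^ 2 = 1 := by linarith
    rcases (by simpa using hs : oinner f1 (omul f2 f3) = 1 ∨ oinner f1 (omul f2 f3) = -1) with h | h <;> simp [h]
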